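/- Let L = L_∃(A) for a nondeterministic reachability automaton A over Σ_I × Σ_O. The following are equivalent: (1) Player O wins the delay game Γ_f(L) for some delay function f; (2) Player O wins Γ_f(L) for some constant delay function f with f(0) ≤ 2^{|A|}; (3) the projection pr_I(L) of L to the first components is universal, i.e., pr_I(L) = Σ_I^ω. -/

import Mathlib

/-!
A strategy for Player O answers, in particular, the play in which Player I spells out a given word
`α` regardless of her moves, so her answer witnesses `α ∈ pr_I(L)`. Conversely, if the projection is
universal, then every word drives the subset construction of the projected automaton into a set
meeting the accepting states within fewer than `2 ^ |Q|` letters: otherwise the pigeonhole principle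
yields a repeated set, and going around that loop forever gives a word outside the projection. Since
reachability is settled by a finite prefix of the run, a block of `2 ^ |Q|` letters tells Player O
a complete answer `β` that works for every continuation of the block.
-/

namespace DelayGames

/-- A delay function: positive in every round. -/
def IsDelay (f : ℕ → ℕ) : Prop := ∀ i, 1 ≤ f i

/-- A constant delay function: `f i = 1` for all `i > 0`. -/
def IsConstant (f : ℕ → ℕ) : Prop := ∀ i, 0 < i → f i = 1

section Games

variable {I O : Type*}

/-- `α` is the ω-word obtained by concatenating the blocks `u 0, u 1, u 2, …`:
every finite concatenation of initial blocks is a prefix of `α`. -/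
def IsCat (u : ℕ → List I) (α : ℕ → I) : Prop :=
  ∀ i, ((List.range i).map u).flatten =
    (List.range (((List.range i).map u).flatten.length)).map α

/-- The blocks of Player I have the lengths prescribed by the delay function. -/
def ValidBlocks (f : ℕ → ℕ) (u : ℕ → List I) : Prop := ∀ i, (u i).length = f i

/-- The play `(u, v)` is consistent with the strategy `τ` of Player O:
in every round, `v i` is prescribed by `τ` applied to `u 0 ⋯ u i`. -/
def ConsistentO (τ : List I → O) (u : ℕ → List I) (v : ℕ → O) : Prop :=
  ∀ i, v i = τ (((List.range (i + 1)).map u).flatten)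

/-- The play `(u, v)` is consistent with the strategy `τ` of Player I:
in every round, `u i` is prescribed by `τ` applied to `v 0 ⋯ v (i-1)`. -/
def ConsistentI (τ : List O → List I) (u : ℕ → List I) (v : ℕ → O) : Prop :=
  ∀ i, u i = τ ((List.range i).map v)

/-- Player O wins the delay game `Γ_f(L)`: she has a strategy such that every
consistent play (against blocks of the prescribed lengths) has its outcome in `L`. -/
def WinsO (f : ℕ → ℕ) (L : Set (ℕ → I × O)) : Prop :=
  ∃ τ : List I → O, ∀ u v α, ValidBlocks f u → ConsistentO τ u v → IsCat u α →
    (fun n => (α n, v n)) ∈ L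

/-- Player I wins the delay game `Γ_f(L)`: he has a strategy respecting the
lengths prescribed by `f` such that no consistent play has its outcome in `L`. -/
def WinsI (f : ℕ → ℕ) (L : Set (ℕ → I × O)) : Prop :=
  ∃ τ : List O → List I, (∀ w, (τ w).length = f w.length) ∧
    ∀ u v α, ConsistentI τ u v → IsCat u α → (fun n => (α n, v n)) ∉ L

/-- Projection of a winning condition to the first components. -/
def projL (L : Set (ℕ → I × O)) : Set (ℕ → I) :=
  {α | ∃ β : ℕ → O, (fun n => (α n, β n)) ∈ L}

end Games

/-- The prefix of length `k` of an ω-word. -/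
def pre {A : Type*} (x : ℕ → A) (k : ℕ) : List A := (List.range k).map x

/-- `K · A^ω`: the ω-words having a finite prefix in `K`. -/
def extOmega {A : Type*} (K : Set (List A)) : Set (ℕ → A) := {x | ∃ k, pre x k ∈ K}

/-- Nondeterministic automata with a complete transition function. -/
structure NA (Q A : Type*) where
  init : Q
  trans : Q → A → Set Q
  accept : Set Q
  complete : ∀ q a, (trans q a).Nonempty

namespace NA

variable {Q A : Type*} (M : NA Q A)

/-- The automaton is deterministic. -/
def Deterministic : Prop := ∀ q a, ∃ q', M.trans q a = {q'}

/-- The states reachable from a set of states after reading a finite word. -/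
def reach (S : Set Q) (w : List A) : Set Q :=
  w.foldl (fun T a => ⋃ q ∈ T, M.trans q a) S

/-- The finite words accepted by `M` (runs from the initial state ending in `accept`). -/
def Lstar : Set (List A) := {w | (M.reach {M.init} w ∩ M.accept).Nonempty}

/-- `ρ` is a run of `M` on the ω-word `x`. -/
def IsRun (x : ℕ → A) (ρ : ℕ → Q) : Prop :=
  ρ 0 = M.init ∧ ∀ n, ρ (n + 1) ∈ M.trans (ρ n) (x n)

/-- Reachability acceptance: some run visits an accepting state at least once. -/
def Lexists : Set (ℕ → A) := {x | ∃ ρ, M.IsRun x ρ ∧ ∃ n, ρ n ∈ M.accept}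

/-- Safety acceptance: some run visits only accepting states. -/
def Lforall : Set (ℕ → A) := {x | ∃ ρ, M.IsRun x ρ ∧ ∀ n, ρ n ∈ M.accept}

/-- A state is productive if an accepting state is reachable from it. -/
def Productive (q : Q) : Prop := ∃ w, (M.reach {q} w ∩ M.accept).Nonempty

/-- A state lies on a cycle. -/
def OnCycle (q : Q) : Prop := ∃ w : List A, w ≠ [] ∧ q ∈ M.reach {q} w

/-- An automaton is acyclic if every state on a cycle is non-productive. -/
def Acyclic : Prop := ∀ q, M.OnCycle q → ¬ M.Productive q

/-- A state is reachable from the initial state. -/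
def ReachableState (q : Q) : Prop := ∃ w, q ∈ M.reach {M.init} w

/-- `k` is the depth of the (acyclic) automaton `M`: the length of a longest
path from the initial state to an accepting state. -/
def HasDepth (k : ℕ) : Prop :=
  (∀ w ∈ M.Lstar, w.length ≤ k) ∧ ∃ w ∈ M.Lstar, w.length = k

end NA

/-- Projection of an automaton over `I × O` to the alphabet `I`. -/
def NA.projI {Q I O : Type*} [Nonempty O] (M : NA Q (I × O)) : NA Q I where
  init := M.init
  trans q a := ⋃ b : O, M.trans q (a, b)
  accept := M.accept
  complete q a := by
    obtain ⟨b⟩ := ‹Nonempty O›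
    obtain ⟨q', hq'⟩ := M.complete q (a, b)
    exact ⟨q', Set.mem_iUnion.2 ⟨b, hq'⟩⟩

/-- Deterministic parity automata. -/
structure DPA (Q A : Type*) where
  init : Q
  trans : Q → A → Q
  color : Q → ℕ

/-- The maximal value occurring infinitely often in the sequence `c` exists
and is even. -/
def MaxEvenInf (c : ℕ → ℕ) : Prop :=
  ∃ k, Even k ∧ {n | c n = k}.Infinite ∧ ∀ k', {n | c n = k'}.Infinite → k' ≤ k

/-- Deterministic finite automata (acceptors for finite words). -/
structure DFAcc (S A : Type*) where
  init : S
  trans : S → A → S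
  accept : Set S

/-- The language of finite words accepted by a DFA. -/
def DFAcc.lang {S A : Type*} (D : DFAcc S A) : Set (List A) :=
  {w | w.foldl D.trans D.init ∈ D.accept}

namespace DPA

variable {Q A : Type*} (M : DPA Q A)

/-- The unique run of a deterministic automaton on an ω-word. -/
def run (x : ℕ → A) : ℕ → Q
  | 0 => M.init
  | n + 1 => M.trans (run x n) (x n)

/-- The parity language of `M`: the maximal color visited infinitely often is even. -/
def Lparity : Set (ℕ → A) := {x | MaxEvenInf fun n => M.color (M.run x n)}

/-- The number of colors of `M`. -/
def numColors [Fintype Q] : ℕ := (Finset.image M.color Finset.univ).card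

end DPA

namespace DPA

variable {Q I O : Type*} (M : DPA Q (I × O))

/-- The transition function of the color-tracking automaton `𝒞`. -/
def transC (qc : Q × ℕ) (x : I × O) : Q × ℕ :=
  (M.trans qc.1 x, max qc.2 (M.color (M.trans qc.1 x)))

/-- The initial state of the color-tracking automaton `𝒞`. -/
def initC : Q × ℕ := (M.init, M.color M.init)

/-- The valid states of `𝒞`, i.e. `Q × Ω(Q)`. -/
def QCvalid : Set (Q × ℕ) := {qc | qc.2 ∈ Set.range M.color}

/-- One step of the powerset automaton of the projection of `𝒞`. -/
def transP (S : Set (Q × ℕ)) (a : I) : Set (Q × ℕ) :=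
  ⋃ s ∈ S, ⋃ b : O, {M.transC s (a, b)}

/-- Iterated powerset transitions `δ_P^*`. -/
def transPStar (S : Set (Q × ℕ)) (w : List I) : Set (Q × ℕ) :=
  w.foldl M.transP S

/-- The domain of a partial function, represented via `Option`. -/
def rdom {Q : Type*} (r : (Q × ℕ) → Option (Set (Q × ℕ))) : Set (Q × ℕ) :=
  {qc | r qc ≠ none}

open scoped Classical in
/-- The partial function `r_w^D` with domain `D`. -/
noncomputable def rOf (D : Set (Q × ℕ)) (w : List I) :
    (Q × ℕ) → Option (Set (Q × ℕ)) :=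
  fun qc =>
    if qc ∈ D then some (M.transPStar ({(qc.1, M.color qc.1)} : Set (Q × ℕ)) w)
    else none

/-- The set `W_r` of witnesses of a partial function `r`. -/
def WitnessSet (r : (Q × ℕ) → Option (Set (Q × ℕ))) : Set (List I) :=
  {w | r = M.rOf (rdom r) w}

/-- The set `𝔉` of partial functions with nonempty domain and infinitely many
witnesses. -/
def Frak : Set ((Q × ℕ) → Option (Set (Q × ℕ))) :=
  {r | (rdom r).Nonempty ∧ (M.WitnessSet r).Infinite}

end DPA

end DelayGames

namespace DelayGames

section Prefixes

variable {A : Type*}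

lemma length_pre (x : ℕ → A) (n : ℕ) : (pre x n).length = n := by
  simp [pre]

lemma pre_succ (x : ℕ → A) (n : ℕ) : pre x (n + 1) = pre x n ++ [x n] := by
  simp [pre, List.range_succ]

lemma pre_succ_eq_cons (x : ℕ → A) (n : ℕ) :
    pre x (n + 1) = x 0 :: pre (fun k => x (k + 1)) n := by
  simp [pre, List.range_succ_eq_map, Function.comp_def]

lemma pre_add (x : ℕ → A) (m n : ℕ) : pre x (m + n) = pre x m ++ pre (fun k => x (m + k)) n := by
  simp [pre, List.range_add, Function.comp_def]

lemma pre_eq_pre_iff {x y : ℕ → A} {n : ℕ} : pre x n = pre y n ↔ ∀ k < n, x k = y k := by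
  simp [pre]

end Prefixes

section DelayGame

variable {I O : Type*} {f : ℕ → ℕ} {L : Set (ℕ → I × O)}

lemma ValidBlocks.length_flatten {u : ℕ → List I} (hu : ValidBlocks f u) (i : ℕ) :
    (pre u i).flatten.length = ∑ k ∈ Finset.range i, f k := by
  induction i with
  | zero => rfl
  | succ i ih => simp [pre_succ, ih, Finset.sum_range_succ, hu i]

lemma ValidBlocks.flatten_eq_pre {u : ℕ → List I} {α : ℕ → I} (hu : ValidBlocks f u)
    (hα : IsCat u α) (i : ℕ) : (pre u i).flatten = pre α (∑ k ∈ Finset.range i, f k) :=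
  hu.length_flatten i ▸ hα i

lemma exists_validBlocks_isCat (f : ℕ → ℕ) (α : ℕ → I) : ∃ u, ValidBlocks f u ∧ IsCat u α := by
  let u : ℕ → List I := fun i => pre (fun k => α (∑ m ∈ Finset.range i, f m + k)) (f i)
  have hu : ValidBlocks f u := fun i => length_pre _ _
  have hflatten : ∀ i, (pre u i).flatten = pre α (∑ k ∈ Finset.range i, f k) := by
    intro i
    induction i with
    | zero => rfl
    | succ i ih => simp [pre_succ, ih, Finset.sum_range_succ, pre_add, u]
  exact ⟨u, hu, fun i => (hflatten i).trans (by rw [← hu.length_flatten i]; rfl)⟩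

theorem WinsO.projL_eq_univ (h : WinsO f L) : projL L = Set.univ := by
  obtain ⟨τ, hτ⟩ := h
  refine Set.eq_univ_of_forall fun α => ?_
  obtain ⟨u, hu, hα⟩ := exists_validBlocks_isCat f α
  exact ⟨_, hτ u _ α hu (fun _ => rfl) hα⟩

/-- The constant delay function with initial lookahead `k`. -/
def constDelay (k : ℕ) : ℕ → ℕ := fun i => if i = 0 then k else 1

lemma isDelay_constDelay {k : ℕ} (hk : 1 ≤ k) : IsDelay (constDelay k) := by
  intro i
  unfold constDelay
  split_ifs
  exacts [hk, le_rfl]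

lemma isConstant_constDelay (k : ℕ) : IsConstant (constDelay k) :=
  fun _ hi => if_neg hi.ne'

lemma sum_range_succ_constDelay (k i : ℕ) :
    ∑ m ∈ Finset.range (i + 1), constDelay k m = k + i := by
  simp [Finset.sum_range_succ', constDelay, add_comm]

theorem winsO_constDelay_of_forall_mem {k : ℕ} (B : List I → ℕ → O)
    (hB : ∀ α, (fun n => (α n, B (pre α k) n)) ∈ L) : WinsO (constDelay k) L := by
  -- In round `i` Player O has seen `k + i` letters, so the length of the input encodes the round.
  refine ⟨fun w => B (w.take k) (w.length - k), fun u v α hu hv hα => ?_⟩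
  have hseen (i : ℕ) : (pre u (i + 1)).flatten = pre α (k + i) := by
    rw [hu.flatten_eq_pre hα, sum_range_succ_constDelay]
  have hv_eq : v = B (pre α k) := by
    funext i
    calc
      v i = B ((pre u (i + 1)).flatten.take k) ((pre u (i + 1)).flatten.length - k) := hv i
      _ = B (pre α k) i := by
        rw [hseen, length_pre, Nat.add_sub_cancel_left, pre_add,
          List.take_left' (length_pre α k)]
  exact hv_eq ▸ hB α

end DelayGame

section Lasso

variable {S : Type*}

lemma exists_lt_map_eq_of_fintype [Fintype S] (s : ℕ → S) :
    ∃ i j, i < j ∧ j ≤ Fintype.card S ∧ s i = s j := by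
  obtain ⟨a, b, hab, h⟩ := Fintype.exists_ne_map_eq_of_card_lt
    (fun k : Fin (Fintype.card S + 1) => s k) (by simp)
  rcases lt_or_gt_of_ne hab with hlt | hlt
  · exact ⟨a, b, hlt, Nat.lt_succ_iff.1 b.2, h⟩
  · exact ⟨b, a, hlt, Nat.lt_succ_iff.1 a.2, h.symm⟩

lemma exists_lasso {s : ℕ → S} {i j : ℕ} (hij : i < j) (h : s i = s j) :
    ∃ φ : ℕ → ℕ, φ 0 = 0 ∧ (∀ n, φ n < j) ∧ ∀ n, s (φ (n + 1)) = s (φ n + 1) := by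
  let next : ℕ → ℕ := fun k => if k + 1 = j then i else k + 1
  have hnext_lt {k : ℕ} (hk : k < j) : next k < j := by grind
  have hnext (k : ℕ) : s (next k) = s (k + 1) := by grind
  refine ⟨fun n => next^[n] 0, rfl, fun n => ?_, fun n => ?_⟩
  · induction n with
    | zero => exact i.zero_le.trans_lt hij
    | succ n ih => simpa only [Function.iterate_succ_apply'] using hnext_lt ih
  · simpa only [Function.iterate_succ_apply'] using hnext (next^[n] 0)

end Lasso

namespace NA

section Runs

variable {Q A : Type*} (M : NA Q A)

lemma reach_pre_succ (S : Set Q) (x : ℕ → A) (n : ℕ) :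
    M.reach S (pre x (n + 1)) = ⋃ q ∈ M.reach S (pre x n), M.trans q (x n) := by
  simp [pre_succ, reach]

lemma exists_run_from (x : ℕ → A) (q : Q) :
    ∃ ρ : ℕ → Q, ρ 0 = q ∧ ∀ k, ρ (k + 1) ∈ M.trans (ρ k) (x k) := by
  choose next hnext using M.complete
  exact ⟨fun n => Nat.rec q (fun k p => next p (x k)) n, rfl, fun k => hnext _ (x k)⟩

lemma exists_run_of_mem_reach {S : Set Q} {x : ℕ → A} {n : ℕ} {q : Q}
    (hq : q ∈ M.reach S (pre x n)) :
    ∃ ρ : ℕ → Q, ρ 0 ∈ S ∧ (∀ k, ρ (k + 1) ∈ M.trans (ρ k) (x k)) ∧ ρ n = q := by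
  induction n generalizing S x with
  | zero =>
    obtain ⟨ρ, rfl, hρ⟩ := M.exists_run_from x q
    exact ⟨ρ, hq, hρ, rfl⟩
  | succ n ih =>
    rw [pre_succ_eq_cons] at hq
    obtain ⟨ρ, hρ₀, hρ, rfl⟩ := ih hq
    obtain ⟨p, hp, hpρ⟩ := Set.mem_iUnion₂.1 hρ₀
    refine ⟨fun | 0 => p | k + 1 => ρ k, hp, fun k => ?_, rfl⟩
    cases k with
    | zero => exact hpρ
    | succ k => exact hρ k

variable {M}

lemma IsRun.mem_reach {x : ℕ → A} {ρ : ℕ → Q} (hρ : M.IsRun x ρ) (n : ℕ) :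
    ρ n ∈ M.reach {M.init} (pre x n) := by
  induction n with
  | zero => exact hρ.1
  | succ n ih =>
    rw [reach_pre_succ]
    exact Set.mem_biUnion ih (hρ.2 n)

lemma pre_mem_Lstar_iff {x : ℕ → A} {n : ℕ} :
    pre x n ∈ M.Lstar ↔ ∃ ρ, M.IsRun x ρ ∧ ρ n ∈ M.accept := by
  constructor
  · rintro ⟨q, hq, hacc⟩
    obtain ⟨ρ, hρ₀, hρ, rfl⟩ := M.exists_run_of_mem_reach hq
    exact ⟨ρ, ⟨hρ₀, hρ⟩, hacc⟩
  · rintro ⟨ρ, hρ, hacc⟩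
    exact ⟨ρ n, hρ.mem_reach n, hacc⟩

theorem mem_Lexists_iff {x : ℕ → A} : x ∈ M.Lexists ↔ ∃ n, pre x n ∈ M.Lstar := by
  simp only [pre_mem_Lstar_iff]
  exact ⟨fun ⟨ρ, hρ, n, hn⟩ => ⟨n, ρ, hρ, hn⟩, fun ⟨n, ρ, hρ, hn⟩ => ⟨ρ, hρ, n, hn⟩⟩

end Runs

section Pigeonhole

variable {Q A : Type*} {M : NA Q A}

lemma reach_pre_comp {x : ℕ → A} {S : Set Q} {φ : ℕ → ℕ} (hφ₀ : φ 0 = 0)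
    (hφ : ∀ n, M.reach S (pre x (φ (n + 1))) = M.reach S (pre x (φ n + 1))) (n : ℕ) :
    M.reach S (pre (x ∘ φ) n) = M.reach S (pre x (φ n)) := by
  induction n with
  | zero => rw [hφ₀]; rfl
  | succ n ih => rw [hφ, reach_pre_succ, reach_pre_succ, ih, Function.comp_apply]

theorem exists_pre_mem_Lstar_of_Lexists_eq_univ [Fintype Q] (hM : M.Lexists = Set.univ)
    (x : ℕ → A) : ∃ n < 2 ^ Fintype.card Q, pre x n ∈ M.Lstar := by
  obtain ⟨i, j, hij, hj, hloop⟩ :=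
    exists_lt_map_eq_of_fintype fun n => M.reach {M.init} (pre x n)
  obtain ⟨φ, hφ₀, hφj, hφ⟩ := exists_lasso (s := fun n => M.reach {M.init} (pre x n)) hij hloop
  have hmem : x ∘ φ ∈ M.Lexists := hM ▸ Set.mem_univ _
  obtain ⟨n, q, hq, hacc⟩ := mem_Lexists_iff.1 hmem
  rw [reach_pre_comp hφ₀ hφ] at hq
  exact ⟨φ n, Fintype.card_set (α := Q) ▸ (hφj n).trans_le hj, q, hq, hacc⟩

end Pigeonhole

section Projection

variable {Q I O : Type*} [Nonempty O] {M : NA Q (I × O)}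

lemma isRun_projI_iff {α : ℕ → I} {ρ : ℕ → Q} :
    M.projI.IsRun α ρ ↔ ∃ β : ℕ → O, M.IsRun (fun n => (α n, β n)) ρ := by
  simp only [IsRun, projI, Set.mem_iUnion, Classical.skolem, exists_and_left]

lemma pre_mem_Lstar_projI_iff {α : ℕ → I} {n : ℕ} :
    pre α n ∈ M.projI.Lstar ↔ ∃ β : ℕ → O, pre (fun m => (α m, β m)) n ∈ M.Lstar := by
  simp only [pre_mem_Lstar_iff, isRun_projI_iff, ← exists_and_right]
  exact exists_comm

lemma projL_Lexists : projL M.Lexists = M.projI.Lexists := by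
  ext α
  simp only [projL, Set.mem_ofPred_eq, mem_Lexists_iff, pre_mem_Lstar_projI_iff]
  exact exists_comm

lemma exists_output_forall_pre_eq_mem_Lexists [Fintype Q] (hM : projL M.Lexists = Set.univ)
    (α : ℕ → I) : ∃ β : ℕ → O, ∀ α' : ℕ → I,
      pre α' (2 ^ Fintype.card Q) = pre α (2 ^ Fintype.card Q) →
        (fun n => (α' n, β n)) ∈ M.Lexists := by
  have hprojI : M.projI.Lexists = Set.univ := projL_Lexists.symm.trans hM
  obtain ⟨n, hn, hacc⟩ := exists_pre_mem_Lstar_of_Lexists_eq_univ hprojI α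
  obtain ⟨β, hβ⟩ := pre_mem_Lstar_projI_iff.1 hacc
  refine ⟨β, fun α' hα' => mem_Lexists_iff.2 ⟨n, ?_⟩⟩
  have hpre : pre (fun m => (α' m, β m)) n = pre (fun m => (α m, β m)) n :=
    pre_eq_pre_iff.2 fun k hk => congrArg (·, β k) (pre_eq_pre_iff.1 hα' k (hk.trans hn))
  exact hpre ▸ hβ

theorem exists_blockwise_output_of_projL_eq_univ [Fintype Q] (hM : projL M.Lexists = Set.univ) :
    ∃ B : List I → ℕ → O,
      ∀ α, (fun n => (α n, B (pre α (2 ^ Fintype.card Q)) n)) ∈ M.Lexists := by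
  have hblock (p : List I) : ∃ β : ℕ → O, ∀ α : ℕ → I, pre α (2 ^ Fintype.card Q) = p →
      (fun n => (α n, β n)) ∈ M.Lexists := by
    by_cases hp : ∃ α : ℕ → I, pre α (2 ^ Fintype.card Q) = p
    · obtain ⟨α, rfl⟩ := hp
      exact exists_output_forall_pre_eq_mem_Lexists hM α
    · exact ⟨Classical.arbitrary _, fun α hα => absurd ⟨α, hα⟩ hp⟩
  choose B hB using hblock
  exact ⟨B, fun α => hB _ α rfl⟩

end Projection

end NA

theorem stmt6_general {Q I O : Type*} [Fintype Q] [Nonempty O] (M : NA Q (I × O)) :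
    [∃ f, IsDelay f ∧ WinsO f M.Lexists,
      ∃ f, IsDelay f ∧ IsConstant f ∧ f 0 ≤ 2 ^ Fintype.card Q ∧ WinsO f M.Lexists,
      projL M.Lexists = Set.univ].TFAE := by
  tfae_have 1 → 3 := fun ⟨_, _, hwin⟩ => hwin.projL_eq_univ
  tfae_have 3 → 2 := fun hM => by
    obtain ⟨B, hB⟩ := NA.exists_blockwise_output_of_projL_eq_univ hM
    exact ⟨constDelay (2 ^ Fintype.card Q), isDelay_constDelay Nat.one_le_two_pow,
      isConstant_constDelay _, le_rfl, winsO_constDelay_of_forall_mem B hB⟩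
  tfae_have 2 → 1 := fun ⟨f, hf, _, _, hwin⟩ => ⟨f, hf, hwin⟩
  tfae_finish

/-- for a nondeterministic reachability automaton `A` over
`Σ_I × Σ_O` and `L = L_∃(A)`, the following are equivalent: (1) Player O wins
`Γ_f(L)` for some delay function `f`; (2) Player O wins `Γ_f(L)` for some
constant delay function `f` with `f(0) ≤ 2^{|A|}`; (3) `pr_I(L)` is universal. -/
theorem stmt6 {Q I O : Type*} [Fintype Q] [Fintype I] [Fintype O]
    [Nonempty I] [Nonempty O] (M : NA Q (I × O)) :
    ((∃ f, IsDelay f ∧ WinsO f M.Lexists) ↔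
      (∃ f, IsDelay f ∧ IsConstant f ∧ f 0 ≤ 2 ^ Fintype.card Q ∧
        WinsO f M.Lexists)) ∧
    ((∃ f, IsDelay f ∧ WinsO f M.Lexists) ↔ projL M.Lexists = Set.univ) :=
  ⟨(stmt6_general M).out 0 1, (stmt6_general M).out 0 2⟩

end DelayGames
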